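/- Let P = {q : ℚ | ∃ m n : ℤ, q = 2^m·3^n} and let S_P = {1, 9/8, 81/64, 4/3, 3/2, 27/16, 243/128, 2} be the Pythagorean scale. For all a, b ∈ S_P, if the arithmetic mean (a+b)/2 belongs to P then (a+b)/2 belongs to S_P. Hence the generator of means applied to the Pythagorean scale with the Pythagorean restriction produces no new sound. -/

import Mathlib

/-- The set of Pythagorean sounds. -/
def pythagoreanSounds : Set ℚ := {q : ℚ | ∃ m n : ℤ, q = 2 ^ m * 3 ^ n}

/-- The Pythagorean diatonic scale. -/
def pythagoreanScale : Set ℚ := {1, 9/8, 81/64, 4/3, 3/2, 27/16, 243/128, 2}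

/-- A prime other than `2` and `3` has valuation zero at every Pythagorean sound. -/
theorem padicValRat_eq_zero_of_mem_pythagoreanSounds {q : ℚ} (hq : q ∈ pythagoreanSounds)
    {p : ℕ} (hp : p.Prime) (hp3 : 3 < p) : padicValRat p q = 0 := by
  obtain ⟨m, n, rfl⟩ := hq
  have : Fact p.Prime := ⟨hp⟩
  have h2 : padicValRat p (2 : ℚ) = 0 := by
    have := padicValNat.eq_zero_of_not_dvd (Nat.not_dvd_of_pos_of_lt two_pos (by lia : 2 < p))
    exact_mod_cast (padicValRat.of_nat (p := p) (n := 2)).trans (congrArg _ this)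
  have h3 : padicValRat p (3 : ℚ) = 0 := by
    have := padicValNat.eq_zero_of_not_dvd (Nat.not_dvd_of_pos_of_lt three_pos hp3)
    exact_mod_cast (padicValRat.of_nat (p := p) (n := 3)).trans (congrArg _ this)
  rw [padicValRat.mul (by positivity) (by positivity), padicValRat.zpow, padicValRat.zpow,
    h2, h3, mul_zero, mul_zero, add_zero]

/-- The numerator of a Pythagorean sound has no prime factor other than `2` and `3`. -/
theorem not_dvd_num_of_mem_pythagoreanSounds {q : ℚ} (hq : q ∈ pythagoreanSounds)
    {p : ℕ} (hp : p.Prime) (hp3 : 3 < p) : ¬ p ∣ q.num.natAbs := by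
  intro hdvd
  have : Fact p.Prime := ⟨hp⟩
  have hq0 : q ≠ 0 := by
    obtain ⟨m, n, rfl⟩ := hq
    positivity
  have hval := padicValRat_eq_zero_of_mem_pythagoreanSounds hq hp hp3
  have hden : ¬ p ∣ q.den := fun h => Nat.not_coprime_of_dvd_of_dvd hp.one_lt hdvd h q.reduced
  have hnum : 1 ≤ padicValNat p q.num.natAbs :=
    one_le_padicValNat_of_dvd (by simpa using hq0) hdvd
  rw [padicValRat, padicValNat.eq_zero_of_not_dvd hden, padicValInt] at hval
  lia

/-- The mean of two sounds of the scale is either in the scale or has a prime factor other than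
`2` and `3` in its numerator. -/
theorem mean_mem_pythagoreanScale_or_exists_prime_dvd_num {a b : ℚ}
    (ha : a ∈ pythagoreanScale) (hb : b ∈ pythagoreanScale) :
    (a + b) / 2 ∈ pythagoreanScale ∨
      ∃ p : ℕ, p.Prime ∧ 3 < p ∧ p ∣ ((a + b) / 2).num.natAbs := by
  let scale : Finset ℚ := {1, 9/8, 81/64, 4/3, 3/2, 27/16, 243/128, 2}
  let primes : Finset ℕ := {5, 7, 11, 17, 43, 59, 499}
  have hscale (x : ℚ) : x ∈ pythagoreanScale ↔ x ∈ scale := by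
    simp [pythagoreanScale, scale]
  have hprimes : ∀ p ∈ primes, p.Prime ∧ 3 < p := by
    simp only [primes, Finset.forall_mem_insert, Finset.mem_singleton, forall_eq]
    norm_num
  have hmean : ∀ a ∈ scale, ∀ b ∈ scale, (a + b) / 2 ∈ scale ∨
      ∃ p ∈ primes, p ∣ ((a + b) / 2).num.natAbs := by
    decide +kernel
  rw [hscale] at ha hb ⊢
  refine (hmean a ha b hb).imp_right ?_
  rintro ⟨p, hp, hdvd⟩
  exact ⟨p, (hprimes p hp).1, (hprimes p hp).2, hdvd⟩

/-- Any arithmetic mean of two sounds of the Pythagorean scale that is a Pythagorean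
sound already belongs to the scale: the generator of means applied to the
Pythagorean scale with the Pythagorean restriction produces no new sound. -/
theorem mean_generator_pythagorean_scale_closed :
    ∀ a ∈ pythagoreanScale, ∀ b ∈ pythagoreanScale,
      (a + b) / 2 ∈ pythagoreanSounds → (a + b) / 2 ∈ pythagoreanScale := by
  intro a ha b hb hmem
  refine (mean_mem_pythagoreanScale_or_exists_prime_dvd_num ha hb).resolve_right ?_
  rintro ⟨p, hp, hp3, hdvd⟩
  exact not_dvd_num_of_mem_pythagoreanSounds hmem hp hp3 hdvd
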